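/- arXiv:2106.02290 — 4 statements merged into one kernel-verified Lean document; each statement's English description precedes it below -/
import Mathlib

section
/- Suppose that for each $k$ we have a real matrix $M_k$ of order $m_k\times n_k$ with entries in $[-1,1]$, where $m_k,n_k\to\infty$ as $k\to\infty$, and the ranks of the $M_k$ are uniformly bounded. Then there exists a subsequence $M_{k_l}$ and a measurable map $W:[0,1]^2\to[-1,1]$ such that $d_2(M_{k_l},W)\to 0$ as $l\to\infty$. -/
/-!
The proof represents all the matrices by one continuous kernel and then applies Helly's selection
theorem to sorted parameters.

A matrix of rank at most `r` with entries in `[-1,1]` factors as `A i j = ∑ a, U i a * V j a` with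
all entries of `U`, `V` in `[-1,1]`: take as basis of the row space a set of rows of maximal
volume, so that by Cramer's rule every row has coefficients in `[-1,1]`
(`exists_factorization`). The cube `[-1,1]^r` is covered by a continuous curve `h` on `[0,1]`
(`exists_space_filling`), so the vectors `U i`, `V j` are points `h (s i)`, `h (t j)` of this curve,
and `A i j = G (s i) (t j)` for a continuous `G` depending on `r` only (`exists_kernel`).

Sorting the parameters `s` and `t` amounts to permuting rows and columns, and turns the step
function of the `k`-th matrix into `G (f k x) (g k y)` with `f k`, `g k` monotone and
`[0,1]`-valued (`exists_sorted_matFun`). By Helly's theorem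
(`exists_subseq_tendsto_of_monotone`) a subsequence of `f k`, `g k` converges almost everywhere to
monotone `f₀`, `g₀`. Then `W x y = G (f₀ x) (g₀ y)` is the limit, by dominated convergence.
-/

open Finset Filter MeasureTheory

/-- The step function on `[0,1]²` associated to an `m × n` matrix `A`: it equals `a_{ij}` on
the open rectangle `((i-1)/m, i/m) × ((j-1)/n, j/n)` (with `1`-based indexing; here the index
`i : Fin m` corresponds to the paper's `i+1`) and is `0` on rectangle boundaries and outside
the unit square. -/
noncomputable def matFun {m n : ℕ} (A : Matrix (Fin m) (Fin n) ℝ) (x y : ℝ) : ℝ :=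
  if h : ∃ (i : Fin m) (j : Fin n),
      (i : ℝ) / m < x ∧ x < ((i : ℝ) + 1) / m ∧ (j : ℝ) / n < y ∧ y < ((j : ℝ) + 1) / n
  then A h.choose h.choose_spec.choose else 0

/-- The `L²([0,1]²)` distance between two functions `F G : ℝ → ℝ → ℝ`. -/
noncomputable def L2dist (F G : ℝ → ℝ → ℝ) : ℝ :=
  Real.sqrt (∫ p in (Set.Icc (0 : ℝ) 1 ×ˢ Set.Icc (0 : ℝ) 1),
    (F p.1 p.2 - G p.1 p.2) ^ 2)

/-- `d₂(A, W) = min_{π ∈ S_m, τ ∈ S_n} ‖A^{π,τ} - W‖_{L²([0,1]²)}`, where `A^{π,τ}` has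
`(i,j)` entry `a_{π(i) τ(j)}`. -/
noncomputable def d2 {m n : ℕ} (A : Matrix (Fin m) (Fin n) ℝ) (W : ℝ → ℝ → ℝ) : ℝ :=
  ⨅ (π : Equiv.Perm (Fin m)) (τ : Equiv.Perm (Fin n)),
    L2dist (matFun (fun i j => A (π i) (τ j))) W

/-! ### Bounded factorization of low-rank matrices -/

/-- A bounded matrix factors through its rank with factors bounded by `1`: the right factor
consists of rows of `A` of maximal volume. -/
lemma exists_factorization_rank {m n : ℕ} (A : Matrix (Fin m) (Fin n) ℝ)
    (hA : ∀ i j, |A i j| ≤ 1) :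
    ∃ (U : Fin m → Fin A.rank → ℝ) (V : Fin n → Fin A.rank → ℝ),
      (∀ i a, |U i a| ≤ 1) ∧ (∀ j a, |V j a| ≤ 1) ∧ ∀ i j, A i j = ∑ a, U i a * V j a := by
  set S := Submodule.span ℝ (Set.range A.row) with hS
  have hd : Module.finrank ℝ S = A.rank := A.rank_eq_finrank_span_row.symm
  let R : Fin m → S := fun i => ⟨A.row i, Submodule.subset_span ⟨i, rfl⟩⟩
  let b : Module.Basis (Fin A.rank) ℝ S := Module.finBasisOfFinrankEq ℝ S hd
  obtain ⟨f, hf, hli⟩ : ∃ f : Fin A.rank → Fin n → ℝ,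
      (∀ a, f a ∈ Set.range A.row) ∧ LinearIndependent ℝ f := by
    rw [A.rank_eq_finrank_span_row]
    obtain ⟨f, hf, -, hli⟩ := Submodule.exists_fun_fin_finrank_span_eq ℝ (Set.range A.row)
    exact ⟨f, hf, hli⟩
  choose ι₁ hι₁ using hf
  have hne : b.det (R ∘ ι₁) ≠ 0 := by
    have h1 : LinearIndependent ℝ (R ∘ ι₁) := by
      apply LinearIndependent.of_comp S.subtype
      convert hli using 1
      ext1 a
      exact hι₁ a
    have h2 := h1.span_eq_top_of_card_eq_finrank' (by simp [hd])
    exact ((Module.Basis.is_basis_iff_det b).1 ⟨h1, h2⟩).ne_zero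
  have : Nonempty (Fin A.rank → Fin m) := ⟨ι₁⟩
  -- The rows `ι` span a parallelepiped of maximal volume among all choices of `A.rank` rows.
  obtain ⟨ι, hι⟩ := Finite.exists_max fun ι : Fin A.rank → Fin m => |b.det (R ∘ ι)|
  have hpos : 0 < |b.det (R ∘ ι)| := (abs_pos.2 hne).trans_le (hι ι₁)
  obtain ⟨h1, h2⟩ := (Module.Basis.is_basis_iff_det b).2 (abs_pos.1 hpos).isUnit
  let c := Module.Basis.mk h1 h2.ge
  refine ⟨fun i a => c.coord a (R i), fun j a => A (ι a) j, fun i a => ?_, fun j a => hA _ _,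
    fun i j => ?_⟩
  -- Cramer's rule: the coefficient is a ratio of two volumes with the maximal one as denominator.
  · have key := congrArg (fun l => l (R i))
      (b.det_smul_mk_coord_eq_det_update h1 h2.ge a)
    simp only [LinearMap.smul_apply, MultilinearMap.toLinearMap_apply, smul_eq_mul] at key
    have hu : Function.update (R ∘ ι) a (R i) = R ∘ Function.update ι a i := by
      rw [Function.comp_update]
    rw [hu] at key
    have := hι (Function.update ι a i)
    have key' : b.det (R ∘ ι) * c.coord a (R i) = b.det (R ∘ Function.update ι a i) := key
    rw [← key', abs_mul] at this
    exact le_of_mul_le_mul_left (by simpa using this) hpos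
  · have h := congrArg (fun s : S => (s : Fin n → ℝ) j) (c.sum_repr (R i))
    simp only [Submodule.coe_sum, Finset.sum_apply, Submodule.coe_smul, Pi.smul_apply,
      smul_eq_mul] at h
    have hc : ∀ a, c a = R (ι a) := fun a => by simp [c]
    simp only [hc] at h
    exact h.symm

lemma exists_factorization {m n r : ℕ} (A : Matrix (Fin m) (Fin n) ℝ)
    (hA : ∀ i j, |A i j| ≤ 1) (hr : A.rank ≤ r) :
    ∃ (U : Fin m → Fin r → ℝ) (V : Fin n → Fin r → ℝ),
      (∀ i a, |U i a| ≤ 1) ∧ (∀ j a, |V j a| ≤ 1) ∧ ∀ i j, A i j = ∑ a, U i a * V j a := by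
  induction r, hr using Nat.le_induction with
  | base => exact exists_factorization_rank A hA
  | succ r _ ih =>
    obtain ⟨U, V, hU, hV, h⟩ := ih
    refine ⟨fun i => Fin.snoc (U i) 0, fun j => Fin.snoc (V j) 0, fun i a => ?_, fun j a => ?_,
      fun i j => ?_⟩
    · refine Fin.lastCases ?_ (fun a => ?_) a <;> simp [hU]
    · refine Fin.lastCases ?_ (fun a => ?_) a <;> simp [hV]
    · simp [Fin.sum_univ_castSucc, h]

/-! ### A universal continuous kernel -/

/-- A continuous curve that covers the cube `[-1,1]^r` already on the unit interval: the
Hausdorff–Alexandroff surjection from the Cantor set, extended to `ℝ` by Tietze's theorem (so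
its values off the Cantor set may leave the cube). -/
lemma exists_space_filling (r : ℕ) :
    ∃ h : ℝ → Fin r → ℝ, Continuous h ∧
      ∀ u : Fin r → ℝ, (∀ a, |u a| ≤ 1) → ∃ s ∈ Set.Icc (0 : ℝ) 1, h s = u := by
  have : Nonempty (Set.Icc (-1 : ℝ) 1) := ⟨0, by norm_num⟩
  obtain ⟨g, hg, hsurj⟩ :=
    exists_nat_bool_continuous_surjective_of_compact (Fin r → Set.Icc (-1 : ℝ) 1)
  obtain ⟨h, hh⟩ := ContinuousMap.exists_restrict_eq isClosed_cantorSet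
    (⟨fun x a => (g (cantorSetHomeomorphNatToBool x) a : ℝ), by fun_prop⟩ :
      C(cantorSet, Fin r → ℝ))
  refine ⟨h, h.continuous, fun u hu => ?_⟩
  obtain ⟨z, hz⟩ := hsurj fun a => ⟨u a, abs_le.1 (hu a)⟩
  refine ⟨cantorSetHomeomorphNatToBool.symm z,
    cantorSet_subset_unitInterval (Subtype.coe_prop _), ?_⟩
  have := congrArg (fun F => F (cantorSetHomeomorphNatToBool.symm z)) hh
  simp only [ContinuousMap.restrict_apply, ContinuousMap.coe_mk, Homeomorph.apply_symm_apply, hz]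
    at this
  exact this

/-- All matrices of rank at most `r` with entries in `[-1,1]`, of any size, are sampled from a
single continuous kernel on the unit square. -/
lemma exists_kernel (r : ℕ) :
    ∃ G : ℝ → ℝ → ℝ, Continuous (Function.uncurry G) ∧ (∀ s t, G s t ∈ Set.Icc (-1 : ℝ) 1) ∧
      ∀ {m n : ℕ} (A : Matrix (Fin m) (Fin n) ℝ), (∀ i j, A i j ∈ Set.Icc (-1 : ℝ) 1) →
        A.rank ≤ r → ∃ (s : Fin m → ℝ) (t : Fin n → ℝ), (∀ i, s i ∈ Set.Icc (0 : ℝ) 1) ∧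
          (∀ j, t j ∈ Set.Icc (0 : ℝ) 1) ∧ ∀ i j, A i j = G (s i) (t j) := by
  obtain ⟨h, hc, hsurj⟩ := exists_space_filling r
  -- The truncation only serves to bound `G` at parameters that represent no matrix entry.
  refine ⟨fun s t => max (-1) (min 1 (∑ a, h s a * h t a)), ?_, fun s t => ?_,
    fun A hA hr => ?_⟩
  · simp only [Function.uncurry_def]
    fun_prop
  · exact ⟨le_max_left _ _, max_le (by norm_num) (min_le_left _ _)⟩
  · obtain ⟨U, V, hU, hV, hUV⟩ := exists_factorization A (fun i j => abs_le.2 (hA i j)) hr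
    choose s hs hsU using fun i => hsurj (U i) (hU i)
    choose t ht htV using fun j => hsurj (V j) (hV j)
    refine ⟨s, t, hs, ht, fun i j => ?_⟩
    simp only [hsU, htV, ← hUV]
    rw [min_eq_right (hA i j).2, max_eq_right (hA i j).1]

/-! ### Helly's selection theorem -/

/-- Helly's selection theorem for uniformly bounded monotone functions: a diagonal subsequence
converges at every rational, hence at every continuity point of the monotone function `g` whose
value at `x` is the supremum of the limits at the rationals below `x`. -/
lemma exists_subseq_tendsto_of_monotone (f : ℕ → ℝ → ℝ) (hf : ∀ k, Monotone (f k))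
    (hb : ∀ k x, f k x ∈ Set.Icc (0 : ℝ) 1) :
    ∃ φ : ℕ → ℕ, StrictMono φ ∧ ∃ g : ℝ → ℝ, Monotone g ∧
      ∀ᵐ x, Tendsto (fun l => f (φ l) x) atTop (nhds (g x)) := by
  obtain ⟨L, φ, hφ, hL⟩ := CompactSpace.tendsto_subseq
    (fun k (q : ℚ) => (⟨f k q, hb k q⟩ : Set.Icc (0 : ℝ) 1))
  have hLq : ∀ q : ℚ, Tendsto (fun l => f (φ l) q) atTop (nhds (L q : ℝ)) := fun q =>
    (continuous_subtype_val.tendsto _).comp (tendsto_pi_nhds.1 hL q)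
  let g : ℝ → ℝ := fun x => sSup ((fun q : ℚ => (L q : ℝ)) '' {q : ℚ | (q : ℝ) < x})
  have bdd : ∀ x, BddAbove ((fun q : ℚ => (L q : ℝ)) '' {q : ℚ | (q : ℝ) < x}) := fun x =>
    ⟨1, by rintro _ ⟨q, -, rfl⟩; exact (L q).2.2⟩
  have hne : ∀ x, ((fun q : ℚ => (L q : ℝ)) '' {q : ℚ | (q : ℝ) < x}).Nonempty := fun x => by
    obtain ⟨q, hq⟩ := exists_rat_lt x
    exact ⟨_, q, hq, rfl⟩
  have hgm : Monotone g := fun x y hxy =>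
    csSup_le_csSup (bdd y) (hne x) (Set.image_mono fun q (hq : (q : ℝ) < x) => hq.trans_le hxy)
  have hlow : ∀ x (q : ℚ), (q : ℝ) < x → (L q : ℝ) ≤ g x := fun x q hq =>
    le_csSup (bdd x) ⟨q, hq, rfl⟩
  have hup : ∀ (x : ℝ) (q : ℚ), x ≤ q → g x ≤ L q := fun x q hq => by
    refine csSup_le (hne x) ?_
    rintro _ ⟨p, hp, rfl⟩
    exact le_of_tendsto_of_tendsto' (hLq p) (hLq q) fun l => hf _ (hp.le.trans hq)
  refine ⟨φ, hφ, g, hgm, ?_⟩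
  have hae : ∀ᵐ x, ContinuousAt g x := by
    rw [ae_iff]
    exact hgm.countable_not_continuousAt.measure_zero _
  filter_upwards [hae] with x hx
  rw [tendsto_order]
  constructor
  · intro a ha
    have h1 : ∀ᶠ y in nhdsWithin x (Set.Iio x), a < g y :=
      (hx.eventually (lt_mem_nhds ha)).filter_mono nhdsWithin_le_nhds
    obtain ⟨y, hy, hyx⟩ := (h1.and self_mem_nhdsWithin).exists
    obtain ⟨q, hq1, hq2⟩ := exists_rat_btwn hyx
    filter_upwards [(hLq q).eventually (lt_mem_nhds (hy.trans_le (hup y q hq1.le)))] with l hl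
    exact hl.trans_le (hf _ hq2.le)
  · intro a ha
    have h1 : ∀ᶠ y in nhdsWithin x (Set.Ioi x), g y < a :=
      (hx.eventually (gt_mem_nhds ha)).filter_mono nhdsWithin_le_nhds
    obtain ⟨y, hy, hyx⟩ := (h1.and self_mem_nhdsWithin).exists
    obtain ⟨q, hq1, hq2⟩ := exists_rat_btwn hyx
    filter_upwards [(hLq q).eventually (gt_mem_nhds ((hlow y q hq2).trans_lt hy))] with l hl
    exact (hf _ hq1.le).trans_lt hl

/-! ### Sorting rows and columns -/

/-- The parameters `s`, sorted by the permutation `σ`, form the steps of a monotone function `f` on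
`ℝ`. Irrational points avoid the endpoints of the steps. -/
lemma exists_sorted_step {m : ℕ} (s : Fin m → ℝ) (hs : ∀ i, s i ∈ Set.Icc (0 : ℝ) 1) :
    ∃ (f : ℝ → ℝ) (σ : Equiv.Perm (Fin m)), Monotone f ∧ (∀ x, f x ∈ Set.Icc (0 : ℝ) 1) ∧
      (0 < m → ∀ x, Irrational x → x ∈ Set.Icc (0 : ℝ) 1 →
        ∃ i : Fin m, (i : ℝ) / m < x ∧ x < ((i : ℝ) + 1) / m ∧ f x = s (σ i)) := by
  rcases Nat.eq_zero_or_pos m with rfl | hm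
  · exact ⟨fun _ => 0, 1, monotone_const, by simp, by simp⟩
  have hm' : (0 : ℝ) < m := by exact_mod_cast hm
  -- The index is capped at `m - 1`, and `⌊·⌋₊` vanishes on negatives: `f` is monotone on all of `ℝ`.
  refine ⟨fun x => s (Tuple.sort s ⟨min ⌊m * x⌋₊ (m - 1), by omega⟩), Tuple.sort s,
    fun x y hxy => Tuple.monotone_sort s ?_, fun x => hs _, fun _ x hx hx01 => ?_⟩
  · rw [Fin.mk_le_mk]
    exact min_le_min_right _ (Nat.floor_mono (by gcongr))
  have hx1 : x < 1 := lt_of_le_of_ne hx01.2 hx.ne_one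
  have hlt : ⌊m * x⌋₊ < m := (Nat.floor_lt (mul_nonneg hm'.le hx01.1)).2 (by nlinarith)
  refine ⟨⟨⌊m * x⌋₊, hlt⟩, ?_, ?_, ?_⟩
  · rw [div_lt_iff₀ hm', mul_comm x]
    refine lt_of_le_of_ne (Nat.floor_le (mul_nonneg hm'.le hx01.1)) fun h => ?_
    exact (hx.natCast_mul hm.ne').ne_nat _ h.symm
  · rw [lt_div_iff₀ hm', mul_comm x]
    exact Nat.lt_floor_add_one _
  · have : min ⌊m * x⌋₊ (m - 1) = ⌊m * x⌋₊ := by omega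
    simp only [this]

lemma index_eq {m : ℕ} {i i' : Fin m} {x : ℝ} (h1 : (i : ℝ) / m < x) (h2 : x < ((i : ℝ) + 1) / m)
    (h1' : (i' : ℝ) / m < x) (h2' : x < ((i' : ℝ) + 1) / m) : i = i' := by
  have hm : (0 : ℝ) < m := by exact_mod_cast i.pos
  have a := (div_lt_div_iff_of_pos_right hm).1 (h1.trans h2')
  have b := (div_lt_div_iff_of_pos_right hm).1 (h1'.trans h2)
  have a' : (i : ℕ) < i' + 1 := by exact_mod_cast a
  have b' : (i' : ℕ) < i + 1 := by exact_mod_cast b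
  ext
  omega

lemma matFun_eq {m n : ℕ} (A : Matrix (Fin m) (Fin n) ℝ) {x y : ℝ} {i : Fin m} {j : Fin n}
    (h1 : (i : ℝ) / m < x) (h2 : x < ((i : ℝ) + 1) / m)
    (h3 : (j : ℝ) / n < y) (h4 : y < ((j : ℝ) + 1) / n) : matFun A x y = A i j := by
  have h : ∃ (i : Fin m) (j : Fin n),
      (i : ℝ) / m < x ∧ x < ((i : ℝ) + 1) / m ∧ (j : ℝ) / n < y ∧ y < ((j : ℝ) + 1) / n :=
    ⟨i, j, h1, h2, h3, h4⟩
  obtain ⟨k1, k2, k3, k4⟩ := h.choose_spec.choose_spec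
  rw [matFun, dif_pos h, index_eq h1 h2 k1 k2, index_eq h3 h4 k3 k4]

lemma exists_sorted_matFun {G : ℝ → ℝ → ℝ} {m n : ℕ} (A : Matrix (Fin m) (Fin n) ℝ)
    {s : Fin m → ℝ} {t : Fin n → ℝ} (hs : ∀ i, s i ∈ Set.Icc (0 : ℝ) 1)
    (ht : ∀ j, t j ∈ Set.Icc (0 : ℝ) 1) (hA : ∀ i j, A i j = G (s i) (t j)) :
    ∃ (f g : ℝ → ℝ) (σ : Equiv.Perm (Fin m)) (τ : Equiv.Perm (Fin n)),
      Monotone f ∧ (∀ x, f x ∈ Set.Icc (0 : ℝ) 1) ∧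
      Monotone g ∧ (∀ x, g x ∈ Set.Icc (0 : ℝ) 1) ∧
      (0 < m → 0 < n → ∀ x y, Irrational x → x ∈ Set.Icc (0 : ℝ) 1 → Irrational y →
        y ∈ Set.Icc (0 : ℝ) 1 → matFun (fun i j => A (σ i) (τ j)) x y = G (f x) (g y)) := by
  obtain ⟨f, σ, hf, hf', hfs⟩ := exists_sorted_step s hs
  obtain ⟨g, τ, hg, hg', hgt⟩ := exists_sorted_step t ht
  refine ⟨f, g, σ, τ, hf, hf', hg, hg', fun hm hn x y hx hx' hy hy' => ?_⟩
  obtain ⟨i, h1, h2, h⟩ := hfs hm x hx hx'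
  obtain ⟨j, h3, h4, h'⟩ := hgt hn y hy hy'
  rw [h, h', ← hA]
  exact matFun_eq _ h1 h2 h3 h4

/-! ### Convergence in `L²` -/

lemma d2_nonneg {m n : ℕ} (A : Matrix (Fin m) (Fin n) ℝ) (W : ℝ → ℝ → ℝ) : 0 ≤ d2 A W :=
  Real.iInf_nonneg fun _ => Real.iInf_nonneg fun _ => Real.sqrt_nonneg _

lemma d2_le {m n : ℕ} (A : Matrix (Fin m) (Fin n) ℝ) (W : ℝ → ℝ → ℝ)
    (σ : Equiv.Perm (Fin m)) (τ : Equiv.Perm (Fin n)) :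
    d2 A W ≤ L2dist (matFun (fun i j => A (σ i) (τ j))) W :=
  (ciInf_le (Set.finite_range _).bddBelow σ).trans (ciInf_le (Set.finite_range _).bddBelow τ)

lemma tendsto_integral_kernel {G : ℝ → ℝ → ℝ} (hG : Continuous (Function.uncurry G))
    (hG1 : ∀ s t, G s t ∈ Set.Icc (-1 : ℝ) 1) {f g : ℕ → ℝ → ℝ} {f₀ g₀ : ℝ → ℝ}
    (hf : ∀ l, Measurable (f l)) (hg : ∀ l, Measurable (g l)) (hf₀ : Measurable f₀)
    (hg₀ : Measurable g₀) (hfl : ∀ᵐ x, Tendsto (fun l => f l x) atTop (nhds (f₀ x)))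
    (hgl : ∀ᵐ x, Tendsto (fun l => g l x) atTop (nhds (g₀ x))) :
    Tendsto (fun l => ∫ p in (Set.Icc (0 : ℝ) 1 ×ˢ Set.Icc (0 : ℝ) 1),
      (G (f l p.1) (g l p.2) - G (f₀ p.1) (g₀ p.2)) ^ 2) atTop (nhds 0) := by
  have hmeas : ∀ {u v : ℝ → ℝ}, Measurable u → Measurable v →
      Measurable fun p : ℝ × ℝ => G (u p.1) (v p.2) := fun {u v} hu hv =>
    hG.measurable.comp ((hu.comp measurable_fst).prodMk (hv.comp measurable_snd))
  have hfin : IsFiniteMeasure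
      ((volume : Measure (ℝ × ℝ)).restrict (Set.Icc (0 : ℝ) 1 ×ˢ Set.Icc (0 : ℝ) 1)) :=
    isFiniteMeasure_restrict.2 (isCompact_Icc.prod isCompact_Icc).measure_lt_top.ne
  have h := tendsto_integral_of_dominated_convergence
    (μ := (volume : Measure (ℝ × ℝ)).restrict (Set.Icc (0 : ℝ) 1 ×ˢ Set.Icc (0 : ℝ) 1))
    (F := fun l p => (G (f l p.1) (g l p.2) - G (f₀ p.1) (g₀ p.2)) ^ 2)
    (f := fun _ => (0 : ℝ)) (fun _ => 4)
    (fun l => (((hmeas (hf l) (hg l)).sub (hmeas hf₀ hg₀)).pow_const 2).aestronglyMeasurable)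
    (integrable_const _)
    (fun l => Eventually.of_forall fun p => by
      obtain ⟨h1, h2⟩ := hG1 (f l p.1) (g l p.2)
      obtain ⟨h3, h4⟩ := hG1 (f₀ p.1) (g₀ p.2)
      rw [Real.norm_eq_abs, abs_of_nonneg (sq_nonneg _)]
      nlinarith)
    (by
      refine ae_restrict_of_ae ?_
      have h1 := Measure.quasiMeasurePreserving_fst (μ := (volume : Measure ℝ))
        (ν := (volume : Measure ℝ)) |>.ae hfl
      have h2 := Measure.quasiMeasurePreserving_snd (μ := (volume : Measure ℝ))
        (ν := (volume : Measure ℝ)) |>.ae hgl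
      rw [Measure.volume_eq_prod]
      filter_upwards [h1, h2] with p hp1 hp2
      have := ((hG.tendsto (f₀ p.1, g₀ p.2)).comp (hp1.prodMk_nhds hp2)).sub_const
        (G (f₀ p.1) (g₀ p.2))
      simpa [Function.uncurry] using this.pow 2)
  simpa using h

/-- If `M_k` are `m_k × n_k` matrices with entries in `[-1,1]`,
`m_k, n_k → ∞`, and uniformly bounded rank, then there is a subsequence `M_{k_l}` and a
measurable `W : [0,1]² → [-1,1]` with `d₂(M_{k_l}, W) → 0`. -/
theorem exists_subseq_d2_tendsto_zero
    (m n : ℕ → ℕ) (hm : Tendsto m atTop atTop) (hn : Tendsto n atTop atTop)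
    (M : (k : ℕ) → Matrix (Fin (m k)) (Fin (n k)) ℝ)
    (hM : ∀ k i j, M k i j ∈ Set.Icc (-1 : ℝ) 1)
    (r : ℕ) (hrank : ∀ k, (M k).rank ≤ r) :
    ∃ (φ : ℕ → ℕ), StrictMono φ ∧
      ∃ W : ℝ → ℝ → ℝ, Measurable (Function.uncurry W) ∧
        (∀ x y, W x y ∈ Set.Icc (-1 : ℝ) 1) ∧
        Tendsto (fun l => d2 (M (φ l)) W) atTop (nhds 0) := by
  obtain ⟨G, hG, hG1, hrep⟩ := exists_kernel r
  choose s t hs ht hst using fun k => hrep (M k) (hM k) (hrank k)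
  choose f g σ τ hf hf1 hg hg1 hfg using fun k =>
    exists_sorted_matFun (M k) (hs k) (ht k) (hst k)
  obtain ⟨φ, hφ, f₀, hf₀, hfl⟩ := exists_subseq_tendsto_of_monotone f hf hf1
  obtain ⟨ψ, hψ, g₀, hg₀, hgl⟩ := exists_subseq_tendsto_of_monotone (fun l => g (φ l))
    (fun l => hg _) (fun l => hg1 _)
  have hφψ : StrictMono (φ ∘ ψ) := hφ.comp hψ
  refine ⟨φ ∘ ψ, hφψ, fun x y => G (f₀ x) (g₀ y), ?_, fun x y => hG1 _ _, ?_⟩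
  · exact hG.measurable.comp
      ((hf₀.measurable.comp measurable_fst).prodMk (hg₀.measurable.comp measurable_snd))
  have hlim := tendsto_integral_kernel hG hG1 (f := fun l => f (φ (ψ l)))
    (g := fun l => g (φ (ψ l))) (fun l => (hf _).measurable) (fun l => (hg _).measurable)
    hf₀.measurable hg₀.measurable (hfl.mono fun x hx => hx.comp hψ.tendsto_atTop) hgl
  have hlim' := (Real.continuous_sqrt.tendsto 0).comp hlim
  rw [Real.sqrt_zero] at hlim'
  refine tendsto_of_tendsto_of_tendsto_of_le_of_le' tendsto_const_nhds hlim'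
    (Eventually.of_forall fun l => d2_nonneg _ _) ?_
  filter_upwards [(hm.comp hφψ.tendsto_atTop).eventually_gt_atTop 0,
    (hn.comp hφψ.tendsto_atTop).eventually_gt_atTop 0] with l hml hnl
  refine (d2_le _ _ (σ _) (τ _)).trans_eq ?_
  refine congrArg Real.sqrt (integral_congr_ae ?_)
  have hirr : ∀ᵐ x : ℝ, Irrational x := by
    filter_upwards [(Set.countable_range ((↑) : ℚ → ℝ)).ae_notMem volume] with x hx using hx
  have h1 := Measure.quasiMeasurePreserving_fst (μ := (volume : Measure ℝ))
    (ν := (volume : Measure ℝ)) |>.ae hirr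
  have h2 := Measure.quasiMeasurePreserving_snd (μ := (volume : Measure ℝ))
    (ν := (volume : Measure ℝ)) |>.ae hirr
  rw [← Measure.volume_eq_prod] at h1 h2
  filter_upwards [ae_restrict_of_ae h1, ae_restrict_of_ae h2,
    ae_restrict_mem (measurableSet_Icc.prod measurableSet_Icc)] with p hp1 hp2 hp
  exact congrArg (fun z => (z - G (f₀ p.1) (g₀ p.2)) ^ 2)
    (hfg _ hml hnl p.1 p.2 hp1 hp.1 hp2 hp.2)
end

section
/- For any $m\times n$ real matrix $A$ with entries in $[-1,1]$ and $\operatorname{rank}(A)\le r$, there exist a sequence of partitions $\{\mathcal{P}_j\}_{j\ge1}$ of $\{1,\ldots,m\}$ and a sequence of partitions $\{\mathcal{Q}_j\}_{j\ge1}$ of $\{1,\ldots,n\}$ such that for each $j$: (1) $\mathcal{P}_{j+1}$ refines $\mathcal{P}_j$ and $\mathcal{Q}_{j+1}$ refines $\mathcal{Q}_j$; (2) $|\mathcal{P}_j|\le(2^{j+2}j)^{j^2}$ and $|\mathcal{Q}_j|\le(2^{j+2}j)^{j^2}$; and (3) $\|A-A^{\mathcal{P}_j,\mathcal{Q}_j}\|_2\le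 2\sqrt{r}/j+6j^3 2^{-j}$. -/
/-!
The proof discretizes a singular value decomposition. Write `A x y = ∑ i, s i * U i x * V i y`,
where `s i` is the `i`-th singular value divided by `√(m n)` and `U i`, `V i` are the singular
vectors scaled by `√m` and `√n`. At stage `j` only the indices with `j * s i > 1` are kept.
Since `∑ s i ^ 2 ≤ 1`, there are at most `j ^ 2` of them; the discarded part has normalized
norm at most `√r / j`, because at most `r` of the `s i` are nonzero; and since the entries of `A`
lie in `[-1, 1]`, the kept `U i`, `V i` take values in `(-j, j)` (`exists_svd`).

The partitions `P j` and `Q j` group the indices for which all kept `U i` (resp. `V i`) have the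
same value rounded down to the grid of mesh `2 ^ (-(j + 1))`. A grid value takes at most
`2 ^ (j + 2) * j` values, which gives the bound on the number of parts, and the dyadic grids are
nested, which gives the refinement property. Replacing the kept `U i`, `V i` by their rounded
values changes each entry by at most `j ^ 3 * 2 ^ (-j)` and yields a block-constant matrix. Finally,
`blockAvg A P Q` is the best block-constant approximation to `A` in the `L²` sense
(`normL2_sub_blockAvg_le`), so it is at least as close to `A` as this matrix.
-/

open Finset

/-- The normalized Frobenius norm `‖A‖₂ = ((mn)⁻¹ ∑ a_{ij}²)^{1/2}`. -/
noncomputable def normL2 {m n : ℕ} (A : Matrix (Fin m) (Fin n) ℝ) : ℝ :=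
  Real.sqrt ((m * n : ℝ)⁻¹ * ∑ i : Fin m, ∑ j : Fin n, (A i j) ^ 2)

/-- The block-averaged version of `A` with respect to a partition `P` of the rows and a
partition `Q` of the columns: each entry is replaced by the average of `A` over the block
containing it. -/
noncomputable def blockAvg {m n : ℕ} (A : Matrix (Fin m) (Fin n) ℝ)
    (P : Finpartition (Finset.univ : Finset (Fin m)))
    (Q : Finpartition (Finset.univ : Finset (Fin n))) : Matrix (Fin m) (Fin n) ℝ :=
  fun i j =>
    (∑ i' ∈ P.part i, ∑ j' ∈ Q.part j, A i' j') / ((P.part i).card * (Q.part j).card)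

/-! ### Block averaging as an orthogonal projection -/

lemma part_eq_of_mem_part {m : ℕ} (P : Finpartition (Finset.univ : Finset (Fin m)))
    {x x' : Fin m} (h : x' ∈ P.part x) : P.part x' = P.part x :=
  P.part_eq_of_mem (P.part_mem.2 (mem_univ x)) h

lemma sum_avg_mul {m : ℕ} (P : Finpartition (Finset.univ : Finset (Fin m)))
    (f g : Fin m → ℝ) (hg : ∀ x, ∀ x' ∈ P.part x, g x' = g x) :
    ∑ x, (∑ x' ∈ P.part x, f x') / (P.part x).card * g x = ∑ x, f x * g x := by
  have hsymm : ∀ x x', x' ∈ P.part x ↔ x ∈ P.part x' := by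
    intro x x'
    rw [Finpartition.mem_part_iff_exists, Finpartition.mem_part_iff_exists]
    simp only [and_comm]
  calc ∑ x, (∑ x' ∈ P.part x, f x') / (P.part x).card * g x
      = ∑ x, ∑ x' ∈ P.part x, f x' / (P.part x').card * g x' := by
        refine sum_congr rfl fun x _ => ?_
        rw [sum_div, sum_mul]
        refine sum_congr rfl fun x' hx' => ?_
        rw [part_eq_of_mem_part P hx', hg x x' hx']
    _ = ∑ x', ∑ x ∈ P.part x', f x' / (P.part x').card * g x' := by
        refine sum_comm' ?_
        intro x x'
        simp [hsymm x x']
    _ = ∑ x, f x * g x := by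
        refine sum_congr rfl fun x _ => ?_
        have : ((P.part x).card : ℝ) ≠ 0 := by
          have : x ∈ P.part x := P.mem_part (mem_univ x)
          exact_mod_cast (card_pos.2 ⟨x, this⟩).ne'
        rw [sum_const, nsmul_eq_mul]
        field_simp

lemma sum_blockAvg_mul {m n : ℕ} (A D : Matrix (Fin m) (Fin n) ℝ)
    (P : Finpartition (Finset.univ : Finset (Fin m)))
    (Q : Finpartition (Finset.univ : Finset (Fin n)))
    (hP : ∀ x y, ∀ x' ∈ P.part x, D x' y = D x y)
    (hQ : ∀ x y, ∀ y' ∈ Q.part y, D x y' = D x y) :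
    ∑ x, ∑ y, blockAvg A P Q x y * D x y = ∑ x, ∑ y, A x y * D x y := by
  have h1 : ∀ x y, blockAvg A P Q x y =
      (∑ x' ∈ P.part x, (∑ y' ∈ Q.part y, A x' y') / (Q.part y).card) / (P.part x).card := by
    intro x y
    rw [blockAvg, ← sum_div, div_div, mul_comm ((Q.part y).card : ℝ)]
  simp_rw [h1]
  rw [sum_comm]
  calc _ = ∑ y, ∑ x, (∑ y' ∈ Q.part y, A x y') / (Q.part y).card * D x y :=
        sum_congr rfl fun y _ => sum_avg_mul P
          (fun x => (∑ y' ∈ Q.part y, A x y') / (Q.part y).card) (fun x => D x y)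
          fun x x' h => hP x y x' h
    _ = _ := by
        rw [sum_comm]
        exact sum_congr rfl fun x _ => sum_avg_mul Q (fun y => A x y) (fun y => D x y)
          (hQ x)

/-- The block average is at least as close to `A` as any other block-constant matrix `C`. -/
lemma normL2_sub_blockAvg_le {m n : ℕ} (A C : Matrix (Fin m) (Fin n) ℝ)
    (P : Finpartition (Finset.univ : Finset (Fin m)))
    (Q : Finpartition (Finset.univ : Finset (Fin n)))
    (hP : ∀ x y, ∀ x' ∈ P.part x, C x' y = C x y)
    (hQ : ∀ x y, ∀ y' ∈ Q.part y, C x y' = C x y) :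
    normL2 (A - blockAvg A P Q) ≤ normL2 (A - C) := by
  unfold normL2
  refine Real.sqrt_le_sqrt (mul_le_mul_of_nonneg_left ?_ (by positivity))
  set M := blockAvg A P Q with hM
  have horth : ∑ x, ∑ y, M x y * (M - C) x y = ∑ x, ∑ y, A x y * (M - C) x y := by
    refine sum_blockAvg_mul A (M - C) P Q ?_ ?_
    · intro x y x' h
      simp only [Matrix.sub_apply, hP x y x' h, hM, blockAvg, part_eq_of_mem_part P h]
    · intro x y y' h
      simp only [Matrix.sub_apply, hQ x y y' h, hM, blockAvg, part_eq_of_mem_part Q h]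
  have hexp : ∑ x, ∑ y, ((A - C) x y) ^ 2 = ∑ x, ∑ y, ((A - M) x y) ^ 2
      + ∑ x, ∑ y, ((M - C) x y) ^ 2
      + 2 * (∑ x, ∑ y, A x y * (M - C) x y - ∑ x, ∑ y, M x y * (M - C) x y) := by
    simp only [← sum_sub_distrib, mul_sum, ← sum_add_distrib]
    refine sum_congr rfl fun x _ => sum_congr rfl fun y _ => ?_
    simp only [Matrix.sub_apply]
    ring
  have hnn : 0 ≤ ∑ x, ∑ y, ((M - C) x y) ^ 2 := by positivity
  rw [hexp, horth]
  linarith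

/-- Minkowski's inequality, with a mean-square bound on `X` and a uniform bound on `Y`. -/
lemma normL2_add_le {m n : ℕ} (X Y : Matrix (Fin m) (Fin n) ℝ) (a e : ℝ) (ha : 0 ≤ a)
    (he : 0 ≤ e) (hX : ∑ x, ∑ y, (X x y) ^ 2 ≤ m * n * a ^ 2) (hY : ∀ x y, |Y x y| ≤ e) :
    normL2 (X + Y) ≤ a + e := by
  have hYs : ∑ x, ∑ y, (Y x y) ^ 2 ≤ m * n * e ^ 2 := by
    calc _ ≤ ∑ _x : Fin m, ∑ _y : Fin n, e ^ 2 :=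
          sum_le_sum fun x _ => sum_le_sum fun y _ =>
            sq_le_sq' (by linarith [(abs_le.1 (hY x y)).1]) (abs_le.1 (hY x y)).2
      _ = _ := by simp [mul_assoc]
  have hXY : ∑ x, ∑ y, X x y * Y x y ≤ m * n * (a * e) := by
    refine abs_le_of_sq_le_sq' ?_ (by positivity) |>.2
    have h := sum_mul_sq_le_sq_mul_sq (univ : Finset (Fin m × Fin n)) (fun p => X p.1 p.2)
      (fun p => Y p.1 p.2)
    simp only [Fintype.sum_prod_type] at h
    refine h.trans ((mul_le_mul hX hYs (by positivity) (by positivity)).trans (le_of_eq ?_))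
    ring
  have hsum : ∑ x, ∑ y, ((X + Y) x y) ^ 2 ≤ m * n * (a + e) ^ 2 := by
    have : ∑ x, ∑ y, ((X + Y) x y) ^ 2 = ∑ x, ∑ y, (X x y) ^ 2 + ∑ x, ∑ y, (Y x y) ^ 2
        + 2 * ∑ x, ∑ y, X x y * Y x y := by
      simp only [mul_sum, ← sum_add_distrib]
      refine sum_congr rfl fun x _ => sum_congr rfl fun y _ => ?_
      simp only [Matrix.add_apply]
      ring
    rw [this]
    linarith
  unfold normL2
  refine Real.sqrt_le_iff.2 ⟨by positivity, ?_⟩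
  calc _ ≤ ((m * n : ℝ))⁻¹ * (m * n * (a + e) ^ 2) :=
        mul_le_mul_of_nonneg_left hsum (by positivity)
    _ = ((m * n : ℝ)⁻¹ * (m * n)) * (a + e) ^ 2 := by ring
    _ ≤ 1 * (a + e) ^ 2 := by
        refine mul_le_mul_of_nonneg_right ?_ (by positivity)
        rcases eq_or_ne (m * n : ℝ) 0 with h | h
        · simp [h]
        · rw [inv_mul_cancel₀ h]
    _ = _ := one_mul _

/-! ### Partitions from dyadic rounding -/

/-- The partition of a finite type into the fibres of a map. -/
noncomputable def fibrePart {m : ℕ} {β : Type*} (f : Fin m → β) :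
    Finpartition (Finset.univ : Finset (Fin m)) :=
  letI := Classical.decRel (Setoid.ker f).r
  Finpartition.ofSetoid (Setoid.ker f)

lemma mem_part_fibrePart {m : ℕ} {β : Type*} (f : Fin m → β) (x x' : Fin m) :
    x' ∈ (fibrePart f).part x ↔ f x = f x' := by
  let := Classical.decRel (Setoid.ker f).r
  exact Finpartition.mem_part_ofSetoid_iff_rel

lemma fibrePart_le {m : ℕ} {β γ : Type*} (f : Fin m → β) (g : Fin m → γ)
    (h : ∀ x x', f x = f x' → g x = g x') : fibrePart f ≤ fibrePart g := by
  intro p hp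
  obtain ⟨x, hx⟩ := (fibrePart f).nonempty_of_mem_parts hp
  refine ⟨(fibrePart g).part x, (fibrePart g).part_mem.2 (mem_univ x), ?_⟩
  rw [← (fibrePart f).part_eq_of_mem hp hx]
  intro x' hx'
  exact (mem_part_fibrePart g x x').2 (h x x' ((mem_part_fibrePart f x x').1 hx'))

lemma card_fibrePart_le {m : ℕ} {β : Type*} (f : Fin m → β) (T : Finset β)
    (hT : ∀ x, f x ∈ T) : (fibrePart f).parts.card ≤ T.card := by
  classical
  have hsub : (fibrePart f).parts ⊆ T.image fun z => univ.filter fun x => f x = z := by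
    intro p hp
    obtain ⟨x, hx⟩ := (fibrePart f).nonempty_of_mem_parts hp
    refine mem_image.2 ⟨f x, hT x, ?_⟩
    rw [← (fibrePart f).part_eq_of_mem hp hx]
    ext x'
    simp [mem_part_fibrePart, eq_comm]
  exact (card_le_card hsub).trans card_image_le

/-- The rounded-down positions, in units of `2 ^ (-(j + 1))`, of the numbers `U i x` over the
indices `i` kept at stage `j`, i.e. those with `1 < j * s i`; discarded indices get the value `0`. -/
noncomputable def gridKey {ι : Type*} {m : ℕ} (s : ι → ℝ) (U : ι → Fin m → ℝ) (j : ℕ)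
    (x : Fin m) (i : ι) : ℤ :=
  if 1 < j * s i then ⌊U i x * 2 ^ (j + 1)⌋ else 0

lemma gridKey_refine {ι : Type*} {m : ℕ} (s : ι → ℝ) (hs : ∀ i, 0 ≤ s i) (U : ι → Fin m → ℝ)
    (j : ℕ) (x x' : Fin m) (h : gridKey s U (j + 1) x = gridKey s U (j + 1) x') :
    gridKey s U j x = gridKey s U j x' := by
  funext i
  unfold gridKey
  split_ifs with hk
  · have hk' : 1 < ((j + 1 : ℕ) : ℝ) * s i := by
      push_cast
      linarith [hs i]
    have hi := congrFun h i
    simp only [gridKey, hk', if_true] at hi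
    have hhalf : ∀ t : ℝ, ⌊t * 2 ^ (j + 1)⌋ = ⌊t * 2 ^ (j + 1 + 1)⌋ / 2 := by
      intro t
      have := Int.floor_div_natCast (t * 2 ^ (j + 1 + 1)) 2
      push_cast at this
      rw [← this]
      congr 1
      rw [pow_succ _ (j + 1)]
      ring
    rw [hhalf, hhalf, hi]
  · rfl

lemma card_gridKey_le {ι : Type*} [Fintype ι] {m : ℕ} (s : ι → ℝ)
    (U : ι → Fin m → ℝ) (j : ℕ) (hj : 1 ≤ j)
    (hU : ∀ i x, 1 < j * s i → |U i x| < j)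
    (hcard : (univ.filter fun i => 1 < j * s i).card ≤ j ^ 2) :
    (fibrePart (gridKey s U j)).parts.card ≤ (2 ^ (j + 2) * j) ^ (j ^ 2) := by
  classical
  let L : ℤ := j * 2 ^ (j + 1)
  let T : Finset (ι → ℤ) := Fintype.piFinset fun i =>
    if 1 < j * s i then Finset.Ico (-L) L else {0}
  have hT : ∀ x, gridKey s U j x ∈ T := by
    intro x
    refine Fintype.mem_piFinset.2 fun i => ?_
    unfold gridKey
    split_ifs with h
    · have hb := abs_lt.1 (hU i x h)
      have h2 : (0 : ℝ) < 2 ^ (j + 1) := by positivity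
      refine Finset.mem_Ico.2 ⟨Int.le_floor.2 ?_, Int.floor_lt.2 ?_⟩
      · simp only [L]
        push_cast
        nlinarith
      · simp only [L]
        push_cast
        nlinarith
    · simp
  refine (card_fibrePart_le _ T hT).trans ?_
  have hTc : T.card = (2 ^ (j + 2) * j) ^ (univ.filter fun i => 1 < j * s i).card := by
    rw [Fintype.card_piFinset, ← prod_const, prod_filter]
    refine prod_congr rfl fun i _ => ?_
    split_ifs with h
    · rw [Int.card_Ico]
      simp only [L]
      zify
      rw [Int.toNat_of_nonneg (by ring_nf; positivity)]
      ring
    · simp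
  rw [hTc]
  exact Nat.pow_le_pow_right (by positivity) hcard

/-! ### The singular value decomposition -/

/-- Right singular vectors `O`, the images `W = A O` and the squared singular values `l`,
obtained by diagonalizing `Aᵀ A`. -/
lemma exists_eigen {m n r : ℕ} (A : Matrix (Fin m) (Fin n) ℝ) (hrank : A.rank ≤ r) :
    ∃ (O : Matrix (Fin n) (Fin n) ℝ) (W : Matrix (Fin m) (Fin n) ℝ) (l : Fin n → ℝ),
      (∀ i k, ∑ y, O y i * O y k = if i = k then 1 else 0) ∧
      (∀ x y, A x y = ∑ i, W x i * O y i) ∧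
      (∀ x i, W x i = ∑ y, A x y * O y i) ∧
      (∀ i, ∑ x, W x i ^ 2 = l i) ∧
      (∀ i y, l i * O y i = ∑ x, A x y * W x i) ∧
      (univ.filter fun i => l i ≠ 0).card ≤ r := by
  have hM : (A.transpose * A).IsHermitian := by
    have := Matrix.isHermitian_conjTranspose_mul_self A
    rwa [Matrix.conjTranspose_eq_transpose_of_trivial] at this
  set O : Matrix (Fin n) (Fin n) ℝ := (hM.eigenvectorUnitary : Matrix (Fin n) (Fin n) ℝ) with hO
  have h1 : O.transpose * O = 1 := by
    have := Unitary.coe_star_mul_self hM.eigenvectorUnitary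
    rwa [Matrix.star_eq_conjTranspose, Matrix.conjTranspose_eq_transpose_of_trivial] at this
  have h2 : O * O.transpose = 1 := mul_eq_one_comm.1 h1
  have h3 : ∀ i y, ∑ x, A x y * (A * O) x i = hM.eigenvalues i * O y i := by
    intro i y
    have h := congrFun (hM.mulVec_eigenvectorBasis i) y
    have e : (A.transpose * (A * O)) y i =
        ((A.transpose * A).mulVec (hM.eigenvectorBasis i)) y := by
      rw [← Matrix.mul_assoc, Matrix.mul_apply]
      rfl
    rw [h, Matrix.mul_apply] at e
    simpa [hO] using e
  have horth : ∀ i k, ∑ y, O y i * O y k = if i = k then 1 else 0 := by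
    intro i k
    have := congrFun (congrFun h1 i) k
    rwa [Matrix.mul_apply, Matrix.one_apply] at this
  refine ⟨O, A * O, hM.eigenvalues, horth, ?_, ?_, ?_, ?_, ?_⟩
  · intro x y
    have : A = (A * O) * O.transpose := by rw [Matrix.mul_assoc, h2, Matrix.mul_one]
    conv_lhs => rw [this, Matrix.mul_apply]
    rfl
  · intro x i
    rw [Matrix.mul_apply]
  · intro i
    calc ∑ x, (A * O) x i ^ 2 = ∑ x, ∑ y, A x y * O y i * (A * O) x i := by
          refine sum_congr rfl fun x _ => ?_
          rw [sq, ← sum_mul, ← Matrix.mul_apply]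
      _ = ∑ y, O y i * ∑ x, A x y * (A * O) x i := by
          rw [sum_comm]
          refine sum_congr rfl fun y _ => ?_
          rw [mul_sum]
          exact sum_congr rfl fun x _ => by ring
      _ = hM.eigenvalues i * ∑ y, O y i * O y i := by
          rw [mul_sum]
          refine sum_congr rfl fun y _ => ?_
          rw [h3]
          ring
      _ = _ := by rw [horth]; simp
  · intro i y
    exact (h3 i y).symm
  · have := hM.rank_eq_card_non_zero_eigs
    rw [Matrix.rank_transpose_mul_self, Fintype.card_subtype] at this
    omega

lemma sum_sq_orthonormal {n : ℕ} (O : Matrix (Fin n) (Fin n) ℝ)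
    (h : ∀ i k, ∑ y, O y i * O y k = if i = k then 1 else 0) (c : Fin n → ℝ) :
    ∑ y, (∑ i, c i * O y i) ^ 2 = ∑ i, c i ^ 2 := by
  calc ∑ y, (∑ i, c i * O y i) ^ 2 = ∑ y, ∑ i, ∑ k, c i * c k * (O y i * O y k) := by
        refine sum_congr rfl fun y _ => ?_
        rw [sq, sum_mul_sum]
        exact sum_congr rfl fun i _ => sum_congr rfl fun k _ => by ring
    _ = ∑ i, ∑ k, c i * c k * ∑ y, O y i * O y k := by
        rw [sum_comm]
        refine sum_congr rfl fun i _ => ?_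
        rw [sum_comm]
        exact sum_congr rfl fun k _ => by rw [mul_sum]
    _ = _ := by simp [h, sq]

lemma sq_sum_mul_le {k : ℕ} (a b : Fin k → ℝ) (ha : ∀ x, a x ∈ Set.Icc (-1 : ℝ) 1) :
    (∑ x, a x * b x) ^ 2 ≤ k * ∑ x, b x ^ 2 := by
  refine (sum_mul_sq_le_sq_mul_sq _ a b).trans (mul_le_mul_of_nonneg_right ?_ (by positivity))
  calc ∑ x, a x ^ 2 ≤ ∑ _x : Fin k, (1 : ℝ) :=
        sum_le_sum fun x _ => by nlinarith [(ha x).1, (ha x).2]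
    _ = k := by simp

/-- The normalized singular value decomposition. The left-hand side of the last bound is the
squared Frobenius norm of the part of `A` coming from the indices with `j * s i ≤ 1`. -/
lemma exists_svd {m n r : ℕ} (hm : 0 < m) (hn : 0 < n) (A : Matrix (Fin m) (Fin n) ℝ)
    (hA : ∀ i j, A i j ∈ Set.Icc (-1 : ℝ) 1) (hrank : A.rank ≤ r) :
    ∃ (s : Fin n → ℝ) (U : Fin n → Fin m → ℝ) (V : Fin n → Fin n → ℝ),
      (∀ i, 0 ≤ s i) ∧ ∑ i, s i ^ 2 ≤ 1 ∧
      ∀ j : ℕ, 1 ≤ j →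
        (∀ i x, 1 < j * s i → |U i x| < j) ∧ (∀ i y, 1 < j * s i → |V i y| < j) ∧
        ∑ x, ∑ y, (A x y - ∑ i, if 1 < j * s i then s i * (U i x * V i y) else 0) ^ 2
          ≤ m * n * (Real.sqrt r / j) ^ 2 := by
  obtain ⟨O, W, l, horth, hAW, hW, hWl, hlO, hr⟩ := exists_eigen A hrank
  have hmR : (0 : ℝ) < m := by exact_mod_cast hm
  have hnR : (0 : ℝ) < n := by exact_mod_cast hn
  have hl : ∀ i, 0 ≤ l i := fun i => by rw [← hWl]; positivity
  have hsl : ∀ i, (Real.sqrt (l i / (m * n))) ^ 2 = l i / (m * n) := fun i =>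
    Real.sq_sqrt (div_nonneg (hl i) (by positivity))
  -- The part of `A` carried by an index set has squared norm equal to the sum of its `l i`.
  have hpars : ∀ p : Fin n → Prop, [DecidablePred p] →
      ∑ x, ∑ y, (∑ i, if p i then W x i * O y i else 0) ^ 2 = ∑ i, if p i then l i else 0 := by
    intro p _
    have : ∀ x, ∑ y, (∑ i, if p i then W x i * O y i else 0) ^ 2
        = ∑ i, if p i then W x i ^ 2 else 0 := by
      intro x
      have := sum_sq_orthonormal O horth (fun i => if p i then W x i else 0)
      simpa only [ite_mul, zero_mul, ite_pow, zero_pow two_ne_zero] using this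
    simp_rw [this]
    rw [sum_comm]
    refine sum_congr rfl fun i _ => ?_
    split_ifs
    · exact hWl i
    · simp
  have hsum : ∑ i, l i ≤ m * n := by
    have h := hpars (fun _ => True)
    simp only [if_true] at h
    rw [← h]
    calc _ ≤ ∑ _x : Fin m, ∑ _y : Fin n, (1 : ℝ) := by
          refine sum_le_sum fun x _ => sum_le_sum fun y _ => ?_
          rw [← hAW]
          nlinarith [(hA x y).1, (hA x y).2]
      _ = _ := by simp
  have hkey : ∀ (j : ℕ) i, 1 ≤ j →
      (1 < j * Real.sqrt (l i / (m * n)) ↔ (m * n : ℝ) < j ^ 2 * l i) := by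
    intro j i hj
    have hnn : 0 ≤ j * Real.sqrt (l i / (m * n)) := by positivity
    rw [← one_lt_sq_iff₀ hnn, mul_pow, hsl, ← mul_div_assoc, one_lt_div (by positivity)]
  refine ⟨fun i => Real.sqrt (l i / (m * n)), fun i x => Real.sqrt (m / l i) * W x i,
    fun i y => Real.sqrt n * O y i, fun i => Real.sqrt_nonneg _, ?_, ?_⟩
  · simp_rw [hsl]
    rw [← sum_div]
    exact (div_le_one (by positivity)).2 hsum
  intro j hj
  have hjR : (0 : ℝ) < j := by exact_mod_cast hj
  have hpos : ∀ i, (m * n : ℝ) < j ^ 2 * l i → 0 < l i := fun i h => by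
    have : (0 : ℝ) < j ^ 2 * l i := lt_trans (by positivity) h
    exact pos_of_mul_pos_right this (by positivity)
  refine ⟨?_, ?_, ?_⟩
  · intro i x h
    rw [hkey j i hj] at h
    have hli := hpos i h
    refine abs_lt_of_sq_lt_sq ?_ hjR.le
    have hb : W x i ^ 2 ≤ n := by
      have := sq_sum_mul_le (fun y => A x y) (fun y => O y i) (fun y => hA x y)
      rw [← hW] at this
      have h1 := horth i i
      simp only [← sq, if_true] at h1
      rwa [h1, mul_one] at this
    rw [mul_pow, Real.sq_sqrt (by positivity), div_mul_eq_mul_div, div_lt_iff₀ hli]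
    nlinarith
  · intro i y h
    rw [hkey j i hj] at h
    have hli := hpos i h
    refine abs_lt_of_sq_lt_sq ?_ hjR.le
    have hb : l i * O y i ^ 2 ≤ m := by
      have := sq_sum_mul_le (fun x => A x y) (fun x => W x i) (fun x => hA x y)
      rw [← hlO, hWl] at this
      refine le_of_mul_le_mul_left (a := l i) ?_ hli
      linarith [this]
    rw [mul_pow, Real.sq_sqrt hnR.le]
    refine lt_of_mul_lt_mul_left (a := l i) ?_ hli.le
    nlinarith
  · have hres : ∀ x y, A x y - (∑ i, if 1 < j * Real.sqrt (l i / (m * n)) then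
        Real.sqrt (l i / (m * n)) * (Real.sqrt (m / l i) * W x i * (Real.sqrt n * O y i)) else 0)
        = ∑ i, if ¬ ((m * n : ℝ) < j ^ 2 * l i) then W x i * O y i else 0 := by
      intro x y
      rw [hAW, ← sum_sub_distrib]
      refine sum_congr rfl fun i _ => ?_
      simp only [hkey j i hj]
      by_cases h : (m * n : ℝ) < j ^ 2 * l i
      · have hli := hpos i h
        have : Real.sqrt (l i / (m * n)) * Real.sqrt (m / l i) * Real.sqrt n = 1 := by
          rw [← Real.sqrt_mul (by positivity), ← Real.sqrt_mul (by positivity), Real.sqrt_eq_one]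
          field_simp
        simp only [h, if_true, not_true, if_false]
        linear_combination (-(W x i * O y i)) * this
      · simp [h]
    simp_rw [hres]
    rw [hpars (fun i => ¬ ((m * n : ℝ) < j ^ 2 * l i))]
    calc ∑ i, (if ¬ ((m * n : ℝ) < j ^ 2 * l i) then l i else 0)
        ≤ ∑ i, if l i ≠ 0 then (m * n / j ^ 2 : ℝ) else 0 := by
          refine sum_le_sum fun i _ => ?_
          split_ifs with h1 h2 h2
          · positivity
          · exact le_rfl
          · rw [le_div_iff₀ (by positivity)]
            linarith
          · exact (not_not.1 h2).le
      _ = (univ.filter fun i => l i ≠ 0).card * (m * n / j ^ 2 : ℝ) := by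
          rw [← sum_filter, sum_const, nsmul_eq_mul]
      _ ≤ r * (m * n / j ^ 2 : ℝ) := by
          refine mul_le_mul_of_nonneg_right ?_ (by positivity)
          exact_mod_cast hr
      _ = _ := by
          rw [div_pow, Real.sq_sqrt (by positivity)]
          ring

/-! ### Combining the pieces -/

lemma card_kept_le {ι : Type*} [Fintype ι] (s : ι → ℝ)
    (hs1 : ∑ i, s i ^ 2 ≤ 1) (j : ℕ) :
    (univ.filter fun i => 1 < j * s i).card ≤ j ^ 2 := by
  classical
  have h : ((univ.filter fun i => 1 < j * s i).card : ℝ) ≤ (j : ℝ) ^ 2 := by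
    calc ((univ.filter fun i => 1 < j * s i).card : ℝ)
        = ∑ i ∈ univ.filter (fun i => 1 < j * s i), (1 : ℝ) := by simp
      _ ≤ ∑ i ∈ univ.filter (fun i => 1 < j * s i), (j * s i) ^ 2 := by
          refine sum_le_sum fun i hi => ?_
          have := (mem_filter.1 hi).2
          nlinarith
      _ ≤ ∑ i, (j * s i) ^ 2 :=
          sum_le_sum_of_subset_of_nonneg (filter_subset _ _) fun i _ _ => sq_nonneg _
      _ = j ^ 2 * ∑ i, s i ^ 2 := by
          rw [mul_sum]
          exact sum_congr rfl fun i _ => by ring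
      _ ≤ j ^ 2 * 1 := mul_le_mul_of_nonneg_left hs1 (by positivity)
      _ = _ := mul_one _
  exact_mod_cast h

/-- Rounding two numbers of `(-j, j)` down to the grid of mesh `2 ^ (-(j + 1))` changes their
product by at most `j * 2 ^ (-j)`. -/
lemma abs_mul_sub_grid_le (j : ℕ) (u v : ℝ) (hu : |u| < j) (hv : |v| < j) :
    |u * v - ⌊u * 2 ^ (j + 1)⌋ / 2 ^ (j + 1) * (⌊v * 2 ^ (j + 1)⌋ / 2 ^ (j + 1))|
      ≤ j * (2 ^ j)⁻¹ := by
  have hg : (0 : ℝ) < 2 ^ (j + 1) := by positivity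
  have key : ∀ t : ℝ, |t - ⌊t * 2 ^ (j + 1)⌋ / 2 ^ (j + 1)| ≤ (2 ^ (j + 1))⁻¹ := by
    intro t
    have h1 := Int.floor_le (t * 2 ^ (j + 1))
    have h2 := (Int.lt_floor_add_one (t * 2 ^ (j + 1))).le
    have e : t - ⌊t * 2 ^ (j + 1)⌋ / 2 ^ (j + 1)
        = (t * 2 ^ (j + 1) - ⌊t * 2 ^ (j + 1)⌋) * (2 ^ (j + 1))⁻¹ := by
      field_simp
    rw [e, abs_mul, abs_of_nonneg (inv_nonneg.2 hg.le)]
    refine mul_le_of_le_one_left (inv_nonneg.2 hg.le) (abs_le.2 ⟨by linarith, by linarith⟩)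
  have hfl : |(⌊v * 2 ^ (j + 1)⌋ : ℝ) / 2 ^ (j + 1)| ≤ j := by
    have hb := abs_lt.1 hv
    have h1 : (-(j * 2 ^ (j + 1)) : ℤ) ≤ ⌊v * 2 ^ (j + 1)⌋ := by
      refine Int.le_floor.2 ?_
      push_cast
      nlinarith
    have h1' : (-(j * 2 ^ (j + 1)) : ℝ) ≤ ⌊v * 2 ^ (j + 1)⌋ := by exact_mod_cast h1
    have h2 := Int.floor_le (v * 2 ^ (j + 1))
    rw [abs_le]
    constructor
    · rw [le_div_iff₀ hg]
      linarith
    · rw [div_le_iff₀ hg]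
      nlinarith
  set u' : ℝ := ⌊u * 2 ^ (j + 1)⌋ / 2 ^ (j + 1)
  set v' : ℝ := ⌊v * 2 ^ (j + 1)⌋ / 2 ^ (j + 1)
  have hku : |u - u'| ≤ (2 ^ (j + 1))⁻¹ := key u
  have hkv : |v - v'| ≤ (2 ^ (j + 1))⁻¹ := key v
  calc |u * v - u' * v'| = |u * (v - v') + (u - u') * v'| := by ring_nf
    _ ≤ |u| * |v - v'| + |u - u'| * |v'| := by
        rw [← abs_mul, ← abs_mul]
        exact abs_add_le _ _
    _ ≤ j * (2 ^ (j + 1))⁻¹ + (2 ^ (j + 1))⁻¹ * j := by gcongr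
    _ = j * (2 ^ j)⁻¹ := by
        rw [pow_succ]
        field_simp
        norm_num

/-- For any `m × n` matrix `A` with entries in `[-1,1]` and rank at most `r`,
there are sequences of partitions `P_j` of the rows and `Q_j` of the columns such that for
every `j ≥ 1`: `P_{j+1}` refines `P_j` and `Q_{j+1}` refines `Q_j`; the numbers of parts are
at most `(2^{j+2} j)^{j²}`; and `‖A - A^{P_j,Q_j}‖₂ ≤ 2√r / j + 6 j³ 2^{-j}`.
(In `Finpartition`, `P' ≤ P` means that `P'` refines `P`.) -/
theorem blockAvg_approx {m n r : ℕ} (A : Matrix (Fin m) (Fin n) ℝ)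
    (hA : ∀ i j, A i j ∈ Set.Icc (-1 : ℝ) 1) (hrank : A.rank ≤ r) :
    ∃ (P : ℕ → Finpartition (Finset.univ : Finset (Fin m)))
      (Q : ℕ → Finpartition (Finset.univ : Finset (Fin n))),
      ∀ j : ℕ, 1 ≤ j →
        (P (j + 1) ≤ P j) ∧ (Q (j + 1) ≤ Q j) ∧
        (P j).parts.card ≤ (2 ^ (j + 2) * j) ^ (j ^ 2) ∧
        (Q j).parts.card ≤ (2 ^ (j + 2) * j) ^ (j ^ 2) ∧
        normL2 (A - blockAvg A (P j) (Q j)) ≤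
          2 * Real.sqrt r / j + 6 * j ^ 3 * 2 ^ (-(j : ℝ)) := by
  classical
  by_cases hmn : 0 < m ∧ 0 < n
  swap
  · -- For an empty matrix the factor `(m n)⁻¹` is `0`, so `normL2` vanishes.
    have h0 : (m * n : ℝ) = 0 := by
      have : m = 0 ∨ n = 0 := by omega
      rcases this with h | h <;> simp [h]
    have hc : ∀ k j : ℕ, 1 ≤ j →
        (fibrePart (fun _ : Fin k => ())).parts.card ≤ (2 ^ (j + 2) * j) ^ (j ^ 2) := by
      intro k j hj
      refine (card_fibrePart_le _ univ fun x => mem_univ _).trans ?_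
      exact Nat.one_le_pow _ _ (by positivity)
    refine ⟨fun _ => fibrePart fun _ => (), fun _ => fibrePart fun _ => (), fun j hj =>
      ⟨le_rfl, le_rfl, hc m j hj, hc n j hj, ?_⟩⟩
    rw [normL2, h0, inv_zero, zero_mul, Real.sqrt_zero]
    positivity
  obtain ⟨s, U, V, hs, hs1, hsvd⟩ := exists_svd hmn.1 hmn.2 A hA hrank
  refine ⟨fun j => fibrePart (gridKey s U j), fun j => fibrePart (gridKey s V j), fun j hj => ?_⟩
  obtain ⟨hU, hV, hres⟩ := hsvd j hj
  have hK := card_kept_le s hs1 j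
  refine ⟨fibrePart_le _ _ fun x x' h => gridKey_refine s hs U j x x' h,
    fibrePart_le _ _ fun x x' h => gridKey_refine s hs V j x x' h,
    card_gridKey_le s U j hj hU hK, card_gridKey_le s V j hj hV hK, ?_⟩
  let B : Matrix (Fin m) (Fin n) ℝ := fun x y =>
    ∑ i, if 1 < j * s i then s i * (U i x * V i y) else 0
  let C : Matrix (Fin m) (Fin n) ℝ := fun x y =>
    ∑ i, s i * ((gridKey s U j x i : ℝ) / 2 ^ (j + 1) * ((gridKey s V j y i : ℝ) / 2 ^ (j + 1)))
  have hBC : ∀ x y, |(B - C) x y| ≤ j ^ 3 * (2 ^ j)⁻¹ := by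
    intro x y
    have hterm : ∀ i, |(if 1 < j * s i then s i * (U i x * V i y) else 0)
        - s i * ((gridKey s U j x i : ℝ) / 2 ^ (j + 1) * ((gridKey s V j y i : ℝ) / 2 ^ (j + 1)))|
        ≤ if 1 < j * s i then j * (2 ^ j : ℝ)⁻¹ else 0 := by
      intro i
      unfold gridKey
      split_ifs with h
      · have hsi : s i ≤ 1 := by
          have : s i ^ 2 ≤ 1 :=
            (single_le_sum (f := fun i => s i ^ 2) (fun i _ => sq_nonneg _) (mem_univ i)).trans hs1
          nlinarith [hs i]
        rw [← mul_sub, abs_mul, abs_of_nonneg (hs i)]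
        exact (mul_le_of_le_one_left (abs_nonneg _) hsi).trans
          (abs_mul_sub_grid_le j _ _ (hU i x h) (hV i y h))
      · simp
    calc |(B - C) x y| = |∑ i, ((if 1 < j * s i then s i * (U i x * V i y) else 0)
        - s i * ((gridKey s U j x i : ℝ) / 2 ^ (j + 1)
          * ((gridKey s V j y i : ℝ) / 2 ^ (j + 1))))| := by
          rw [sum_sub_distrib, Matrix.sub_apply]
      _ ≤ ∑ i, if 1 < j * s i then j * (2 ^ j : ℝ)⁻¹ else 0 :=
          (abs_sum_le_sum_abs _ _).trans (sum_le_sum fun i _ => hterm i)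
      _ = (univ.filter fun i => 1 < j * s i).card * (j * (2 ^ j : ℝ)⁻¹) := by
          rw [← sum_filter, sum_const, nsmul_eq_mul]
      _ ≤ (j : ℝ) ^ 2 * (j * (2 ^ j : ℝ)⁻¹) := by
          refine mul_le_mul_of_nonneg_right ?_ (by positivity)
          exact_mod_cast hK
      _ = _ := by ring
  have h1 : normL2 (A - blockAvg A (fibrePart (gridKey s U j)) (fibrePart (gridKey s V j)))
      ≤ normL2 (A - C) := by
    refine normL2_sub_blockAvg_le A C _ _ ?_ ?_
    · intro x y x' h
      simp only [C, (mem_part_fibrePart _ x x').1 h]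
    · intro x y y' h
      simp only [C, (mem_part_fibrePart _ y y').1 h]
  have h2 : normL2 (A - C) ≤ Real.sqrt r / j + j ^ 3 * (2 ^ j)⁻¹ := by
    have : A - C = (A - B) + (B - C) := by abel
    rw [this]
    exact normL2_add_le _ _ _ _ (by positivity) (by positivity) hres hBC
  refine h1.trans (h2.trans ?_)
  rw [Real.rpow_neg (by norm_num), Real.rpow_natCast]
  refine add_le_add ?_ ?_
  · refine div_le_div_of_nonneg_right ?_ (by positivity)
    linarith [Real.sqrt_nonneg (r : ℝ)]
  · have : (0 : ℝ) ≤ j ^ 3 * (2 ^ j)⁻¹ := by positivity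
    linarith
end

section
/- Let $M$ and $\hat{M}$ be $m\times n$ real matrices, let $x<y$ be reals, and let $0<\delta<(y-x)/2$. Define $S:=\{(i,j):m_{ij}\in[x,y)\}$, $T:=\{(i,j):\hat{m}_{ij}\in[x,y)\}$, and let $N$ be the number of pairs $(i,j)$ with $m_{ij}\in[x-\delta,x+\delta]\cup[y-\delta,y+\delta]$. Then $|T\,\Delta\,S|\le\frac{2}{\delta^2}\sum_{i=1}^m\sum_{j=1}^n(m_{ij}-\hat{m}_{ij})^2+2N$, where $\Delta$ denotes symmetric difference. -/
/-!
A position in `T Δ S` at which `M` is not within `δ` of an endpoint `x` or `y` has its two entries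
on opposite sides of an endpoint from which `M` is more than `δ` away, so they differ by
at least `δ` (`sq_le_of_mem_iff_ne`). A Markov-type count bounds the number of such positions by
`δ⁻² ∑ (m_{ij} - m̂_{ij})²`, and the remaining ones are at most `N`. This gives the bound even
with constant `1` in place of both factors `2`.
-/

open Finset

/-- If exactly one of `a`, `b` lies in `[x, y)` and `a` is not within `δ` of `x` or `y`,
then `a` and `b` are at distance at least `δ`. -/
lemma sq_le_of_mem_iff_ne {x y δ a b : ℝ} (hδ : 0 < δ)
    (hab : ¬ (b ∈ Set.Ico x y ↔ a ∈ Set.Ico x y))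
    (ha : a ∉ Set.Icc (x - δ) (x + δ) ∪ Set.Icc (y - δ) (y + δ)) :
    δ ^ 2 ≤ (a - b) ^ 2 := by
  rw [sq_le_sq, abs_of_pos hδ, le_abs]
  simp only [Set.mem_union, Set.mem_Icc, Set.mem_Ico] at hab ha
  grind

/-- For `m × n` matrices `M`, `M̂`, reals `x < y` and `0 < δ < (y-x)/2`, with
`S = {(i,j) : m_{ij} ∈ [x,y)}`, `T = {(i,j) : m̂_{ij} ∈ [x,y)}` and `N` the number of pairs
`(i,j)` with `m_{ij} ∈ [x-δ, x+δ] ∪ [y-δ, y+δ]`, one has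
`|T Δ S| ≤ (2/δ²) ∑_{i,j} (m_{ij} - m̂_{ij})² + 2N`. -/
theorem card_symmDiff_le {m n : ℕ} (M Mhat : Matrix (Fin m) (Fin n) ℝ)
    (x y δ : ℝ) (hxy : x < y) (hδ : 0 < δ) (hδ' : δ < (y - x) / 2)
    (S T : Finset (Fin m × Fin n)) (N : ℕ)
    (hS : S = Finset.univ.filter (fun p : Fin m × Fin n => M p.1 p.2 ∈ Set.Ico x y))
    (hT : T = Finset.univ.filter (fun p : Fin m × Fin n => Mhat p.1 p.2 ∈ Set.Ico x y))
    (hN : N = (Finset.univ.filter (fun p : Fin m × Fin n =>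
      M p.1 p.2 ∈ Set.Icc (x - δ) (x + δ) ∪ Set.Icc (y - δ) (y + δ))).card) :
    ((symmDiff T S).card : ℝ) ≤
      (2 / δ ^ 2) * ∑ i : Fin m, ∑ j : Fin n, (M i j - Mhat i j) ^ 2 + 2 * N := by
  classical
  set B := Finset.univ.filter (fun p : Fin m × Fin n =>
    M p.1 p.2 ∈ Set.Icc (x - δ) (x + δ) ∪ Set.Icc (y - δ) (y + δ)) with hB
  set Q := ∑ i : Fin m, ∑ j : Fin n, (M i j - Mhat i j) ^ 2 with hQ
  have hQ0 : 0 ≤ Q := by positivity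
  have hQp : Q = ∑ p : Fin m × Fin n, (M p.1 p.2 - Mhat p.1 p.2) ^ 2 := by
    rw [hQ, Fintype.sum_prod_type]
  have hfar : ((symmDiff T S \ B).card : ℝ) * δ ^ 2 ≤ Q := by
    rw [hQp, ← nsmul_eq_mul]
    refine (Finset.card_nsmul_le_sum _ (fun p => (M p.1 p.2 - Mhat p.1 p.2) ^ 2) _ ?_).trans
      (Finset.sum_le_univ_sum_of_nonneg fun p => sq_nonneg _)
    intro p hp
    rw [Finset.mem_sdiff, Finset.mem_symmDiff, hS, hT, hB] at hp
    simp only [Finset.mem_filter, Finset.mem_univ, true_and] at hp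
    exact sq_le_of_mem_iff_ne hδ (by tauto) hp.2
  have hcard : ((symmDiff T S).card : ℝ) ≤ (symmDiff T S \ B).card + N := by
    rw [hN]
    exact_mod_cast Finset.card_le_card_sdiff_add_card
  have hfar' : ((symmDiff T S \ B).card : ℝ) ≤ Q / δ ^ 2 :=
    (le_div_iff₀ (by positivity)).2 hfar
  have hpos : 0 ≤ Q / δ ^ 2 := by positivity
  have hN0 : (0 : ℝ) ≤ N := N.cast_nonneg
  have hconst : 2 / δ ^ 2 * Q = 2 * (Q / δ ^ 2) := by ring
  linarith
end

section
/- Let $I$ be a finite set, let $p:I\to[0,1]$, and let $S,T\subseteq I$ with $S$ nonempty. Define $\mathrm{avg}_S:=|S|^{-1}\sum_{i\in S}p(i)$, and $\mathrm{avg}_T:=|T|^{-1}\sum_{i\in T}p(i)$ if $T$ is nonempty and $\mathrm{avg}_T:=0$ otherwise. Then $|\mathrm{avg}_S-\mathrm{avg}_T|\le 2|T\,\Delta\,S|/|S|$, where $\Delta$ denotes symmetric difference. -/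
open Finset

/-!
Write `c` for the average over `T`. Then `c ∈ [0,1]` and `∑_{i ∈ T} (p i - c) = 0`, also when
`T = ∅`. Hence `|S| (avg_S - c) = ∑_S (p - c) - ∑_T (p - c) = ∑_{S \ T} (p - c) - ∑_{T \ S} (p - c)`,
and every summand has absolute value at most `1`, so the modulus is at most `|T Δ S|`. This is
the claim with constant `1` in place of `2`.
-/

/-- Let `I` be a finite set, `p : I → [0,1]`, and `S, T ⊆ I` with `S` nonempty.
With `avg_S = |S|⁻¹ ∑_{i ∈ S} p i`, and `avg_T` defined analogously (`0` if `T = ∅`),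
we have `|avg_S - avg_T| ≤ 2 |T Δ S| / |S|`. -/
theorem avg_diff_le_symmDiff {I : Type*} [Fintype I] [DecidableEq I]
    (p : I → ℝ) (hp : ∀ i, p i ∈ Set.Icc (0 : ℝ) 1)
    (S T : Finset I) (hS : S.Nonempty)
    (avgS avgT : ℝ)
    (havgS : avgS = (S.card : ℝ)⁻¹ * ∑ i ∈ S, p i)
    (havgT : avgT = if T.Nonempty then (T.card : ℝ)⁻¹ * ∑ i ∈ T, p i else 0) :
    |avgS - avgT| ≤ 2 * ((symmDiff T S).card : ℝ) / S.card := by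
  have hScard : (0 : ℝ) < S.card := by exact_mod_cast hS.card_pos
  have hc : (0 ≤ avgT ∧ avgT ≤ 1) ∧ ∑ i ∈ T, (p i - avgT) = 0 := by
    by_cases hT : T.Nonempty
    · have hTcard : (0 : ℝ) < T.card := by exact_mod_cast hT.card_pos
      rw [if_pos hT] at havgT
      have h0 : 0 ≤ ∑ i ∈ T, p i := Finset.sum_nonneg fun i _ => (hp i).1
      have h1 : ∑ i ∈ T, p i ≤ T.card := by
        simpa using Finset.sum_le_card_nsmul T p 1 fun i _ => (hp i).2
      refine ⟨⟨?_, ?_⟩, ?_⟩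
      · rw [havgT]; positivity
      · rw [havgT, inv_mul_le_iff₀ hTcard]; simpa using h1
      · rw [Finset.sum_sub_distrib, Finset.sum_const, nsmul_eq_mul, havgT,
          mul_inv_cancel_left₀ hTcard.ne', sub_self]
    · rw [if_neg hT] at havgT
      rw [Finset.not_nonempty_iff_eq_empty] at hT
      simp [havgT, hT]
  obtain ⟨⟨hc0, hc1⟩, hsumT⟩ := hc
  have hsumS : ∑ i ∈ S, (p i - avgT) = (avgS - avgT) * S.card := by
    rw [Finset.sum_sub_distrib, Finset.sum_const, nsmul_eq_mul, havgS]
    field_simp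
  have hbound : ∀ U : Finset I, |∑ i ∈ U, (p i - avgT)| ≤ U.card := fun U => by
    refine (Finset.abs_sum_le_sum_abs _ _).trans ?_
    have h := Finset.sum_le_card_nsmul U (fun i => |p i - avgT|) 1 fun i _ =>
      abs_le.2 ⟨by linarith [(hp i).1], by linarith [(hp i).2]⟩
    simpa using h
  have hcard : ((symmDiff T S).card : ℝ) = (T \ S).card + (S \ T).card := by
    rw [symmDiff_def, Finset.sup_eq_union,
      Finset.card_union_of_disjoint disjoint_sdiff_sdiff, Nat.cast_add]
  have hdiff : (avgS - avgT) * S.card =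
      ∑ i ∈ S \ T, (p i - avgT) - ∑ i ∈ T \ S, (p i - avgT) := by
    rw [Finset.sum_sdiff_sub_sum_sdiff, hsumS, hsumT, sub_zero]
  rw [le_div_iff₀ hScard, ← abs_of_pos hScard, ← abs_mul, hdiff, hcard]
  have h := abs_sub (∑ i ∈ S \ T, (p i - avgT)) (∑ i ∈ T \ S, (p i - avgT))
  have hTS : (0 : ℝ) ≤ (T \ S).card := Nat.cast_nonneg _
  have hST : (0 : ℝ) ≤ (S \ T).card := Nat.cast_nonneg _
  linarith [hbound (S \ T), hbound (T \ S)]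
end
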